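/- In the root system of type C_ℓ, for 1 ≤ j ≤ ℓ−1 one has σ_ℓσ_{ℓ−1}⋯σ_1(λ_j) = λ_{j−1} + λ_{ℓ−1} − λ_ℓ (with λ_0 = 0), and σ_ℓσ_{ℓ−1}⋯σ_1(λ_ℓ) = 2λ_{ℓ−1} − λ_ℓ. -/

import Mathlib

/-- The fundamental weight `λ_j` (1-indexed), written in the fundamental weight basis
of the weight lattice `Fin ℓ → ℤ`.  By convention `λ_j = 0` when `j = 0` or `j > ℓ`. -/
def lam (ℓ : ℕ) (j : ℕ) : Fin ℓ → ℤ :=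
  if h : 1 ≤ j ∧ j ≤ ℓ then Pi.single (⟨j - 1, by omega⟩ : Fin ℓ) 1 else 0

/-- The simple root `α_i` (1-indexed) determined by the Cartan matrix `C`
via `α_i = ∑_j C i j • λ_j`. -/
def rootOf (ℓ : ℕ) (C : ℕ → ℕ → ℤ) (i : ℕ) : Fin ℓ → ℤ :=
  fun k => C i (k.1 + 1)

/-- The simple reflection `σ_i = σ_{α_i}`.  Since the fundamental weights are dual to the
simple coroots, `⟨μ, α_i^∨⟩` is the `i`-th coordinate of `μ` in the fundamental weight
basis, and `σ_i μ = μ - ⟨μ, α_i^∨⟩ α_i`. -/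
def sref (ℓ : ℕ) (C : ℕ → ℕ → ℤ) (i : ℕ) (μ : Fin ℓ → ℤ) : Fin ℓ → ℤ :=
  if h : 1 ≤ i ∧ i ≤ ℓ then μ - μ ⟨i - 1, by omega⟩ • rootOf ℓ C i else μ

/-- The Weyl group element `σ_{i₁} σ_{i₂} ⋯ σ_{iₖ}` (applied to `μ`), for a word
`[i₁, i₂, …, iₖ]` in the simple reflections. -/
def word (ℓ : ℕ) (C : ℕ → ℕ → ℤ) (l : List ℕ) (μ : Fin ℓ → ℤ) : Fin ℓ → ℤ :=
  l.foldr (sref ℓ C) μ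

/-- The Cartan matrix of type `C_ℓ` (with `α_ℓ` long):
`α_i = -λ_{i-1} + 2λ_i - λ_{i+1}` for `i < ℓ` and `α_ℓ = -2λ_{ℓ-1} + 2λ_ℓ`. -/
def cartanC (ℓ : ℕ) : ℕ → ℕ → ℤ := fun i j =>
  if i = j then 2
  else if i + 1 = j then -1
  else if j + 1 = i then (if i = ℓ then -2 else -1)
  else 0

/-- The word `(σ_ℓ σ_{ℓ-1} ⋯ σ_1)(σ_ℓ σ_{ℓ-1} ⋯ σ_2) ⋯ (σ_ℓ σ_{ℓ-1})(σ_ℓ)`. -/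
def wordC (ℓ : ℕ) : List ℕ :=
  (List.range ℓ).flatMap (fun k => (List.range (ℓ - k)).map (fun t => ℓ - t))

lemma lam_apply_aux (ℓ j : ℕ) (k : Fin ℓ) : lam ℓ j k = if k.1 + 1 = j then 1 else 0 := by
  unfold lam
  have := k.2
  by_cases h : 1 ≤ j ∧ j ≤ ℓ
  · rw [dif_pos h, Pi.single_apply]
    congr 1
    rw [Fin.ext_iff]
    simp only [eq_iff_iff]
    omega
  · rw [dif_neg h, if_neg (by omega)]
    rfl

lemma word_succ_aux (ℓ : ℕ) (C : ℕ → ℕ → ℤ) (m : ℕ) (μ : Fin ℓ → ℤ) :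
    word ℓ C ((List.range (m + 1)).map (fun t => m + 1 - t)) μ
      = sref ℓ C (m + 1) (word ℓ C ((List.range m).map (fun t => m - t)) μ) := by
  rw [List.range_succ_eq_map]
  simp [word, Function.comp_def]

lemma word_fix_aux (ℓ j : ℕ) (hj : j ≤ ℓ) (m : ℕ) (hm : m < j) :
    word ℓ (cartanC ℓ) ((List.range m).map (fun t => m - t)) (lam ℓ j) = lam ℓ j := by
  induction m with
  | zero => rfl
  | succ m ih =>
    rw [word_succ_aux, ih (by omega), sref, dif_pos (by omega), lam_apply_aux,
      if_neg (by simp; omega)]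
    simp

lemma word_mid_aux (ℓ j : ℕ) (hj : 1 ≤ j) (m : ℕ) (hjm : j ≤ m) (hm : m < ℓ) :
    word ℓ (cartanC ℓ) ((List.range m).map (fun t => m - t)) (lam ℓ j)
      = lam ℓ (j - 1) - lam ℓ m + lam ℓ (m + 1) := by
  induction m with
  | zero => omega
  | succ m ih =>
    rw [word_succ_aux]
    by_cases h : j ≤ m
    · rw [ih h (by omega), sref, dif_pos (by omega)]
      ext k
      simp only [Pi.sub_apply, Pi.add_apply, Pi.smul_apply, lam_apply_aux, rootOf, cartanC, smul_eq_mul]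
      grind
    · obtain rfl : j = m + 1 := by omega
      rw [word_fix_aux ℓ (m+1) (by omega) m (by omega), sref, dif_pos (by omega)]
      ext k
      simp only [Pi.sub_apply, Pi.add_apply, Pi.smul_apply, lam_apply_aux, rootOf, cartanC, smul_eq_mul]
      grind

/-- In type `C_ℓ`, the element `σ_ℓ σ_{ℓ-1} ⋯ σ_1` satisfies
`σ_ℓ ⋯ σ_1 (λ_j) = λ_{j-1} + λ_{ℓ-1} - λ_ℓ` for `1 ≤ j ≤ ℓ-1` (with `λ_0 = 0`),
and `σ_ℓ ⋯ σ_1 (λ_ℓ) = 2λ_{ℓ-1} - λ_ℓ`. -/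
theorem typeC_descending_on_fundamental_weights (ℓ : ℕ) (hℓ : 2 ≤ ℓ) :
    (∀ j, 1 ≤ j → j ≤ ℓ - 1 →
      word ℓ (cartanC ℓ) ((List.range ℓ).map (fun t => ℓ - t)) (lam ℓ j)
        = lam ℓ (j - 1) + lam ℓ (ℓ - 1) - lam ℓ ℓ) ∧
    word ℓ (cartanC ℓ) ((List.range ℓ).map (fun t => ℓ - t)) (lam ℓ ℓ)
      = 2 • lam ℓ (ℓ - 1) - lam ℓ ℓ := by
  obtain ⟨m, rfl⟩ : ∃ m, ℓ = m + 1 := ⟨ℓ - 1, by omega⟩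
  refine ⟨fun j h1 h2 => ?_, ?_⟩
  · rw [word_succ_aux, word_mid_aux (m + 1) j h1 m (by omega) (by omega), sref, dif_pos (by omega)]
    ext k
    have := k.2
    simp only [Pi.sub_apply, Pi.add_apply, Pi.smul_apply, lam_apply_aux, rootOf, cartanC, smul_eq_mul]
    grind
  · rw [word_succ_aux, word_fix_aux (m + 1) (m + 1) le_rfl m (by omega), sref, dif_pos (by omega), two_nsmul]
    ext k
    have := k.2
    simp only [Pi.sub_apply, Pi.add_apply, Pi.smul_apply, lam_apply_aux, rootOf, cartanC, smul_eq_mul]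
    grind
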